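/- arXiv:math/0209319 — 4 statements merged into one kernel-verified Lean document; each statement's English description precedes it below -/
import Mathlib

section
/- Let n ≥ 1 and let x, y ∈ ℝⁿ with x ≠ 0 and ⟨x,y⟩ = 0. Let g : ℝⁿ ∖ {0} → ℝⁿ be the map g(x) = x/‖x‖, and let Dg_x denote its Fréchet derivative at x. Then for every ξ ∈ ℝⁿ one has ⟨−‖x‖·y, Dg_x(ξ)⟩ = −⟨y, ξ⟩. -/
/-- For `x ≠ 0` with `⟨x,y⟩ = 0`, and `g(x) = x/‖x‖`, one has
`⟨−‖x‖·y, Dg_x(ξ)⟩ = −⟨y, ξ⟩` for every `ξ`. -/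
theorem stmt_3 (n : ℕ) (hn : 1 ≤ n) (x y : EuclideanSpace ℝ (Fin n))
    (hx : x ≠ 0) (hxy : (inner ℝ x y : ℝ) = 0) (ξ : EuclideanSpace ℝ (Fin n)) :
    (inner ℝ (-(‖x‖ • y))
        (fderiv ℝ (fun w : EuclideanSpace ℝ (Fin n) => ‖w‖⁻¹ • w) x ξ) : ℝ)
      = -(inner ℝ y ξ : ℝ) := by
  have hnx : ‖x‖ ≠ 0 := norm_ne_zero_iff.mpr hx
  have hd : DifferentiableAt ℝ (fun w : EuclideanSpace ℝ (Fin n) => ‖w‖⁻¹) x :=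
    (differentiableAt_id.norm ℝ hx).inv hnx
  have h := (hd.hasFDerivAt.smul (hasFDerivAt_id x)).fderiv
  have h2 : fderiv ℝ (fun w : EuclideanSpace ℝ (Fin n) => ‖w‖⁻¹ • w) x ξ
      = ‖x‖⁻¹ • ξ + (fderiv ℝ (fun w : EuclideanSpace ℝ (Fin n) => ‖w‖⁻¹) x ξ) • x := by
    have h3 := congrArg (fun L => L ξ) h
    simp at h3
    exact h3
  have hyx : (inner ℝ y x : ℝ) = 0 := by rw [real_inner_comm]; exact hxy
  rw [h2, inner_neg_left, inner_add_right, real_inner_smul_left, real_inner_smul_left,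
    real_inner_smul_right, real_inner_smul_right, hyx]
  field_simp
  ring
end

section
/- Let x₁, x₂, x₃, x₄ be positive real numbers and let λ be a real number with 0 ≤ λ < 5. Then there is no complex number x₅ satisfying both x₅⁵ − λ·x₁x₂x₃x₄·x₅ + (x₁⁵ + x₂⁵ + x₃⁵ + x₄⁵) = 0 and 5x₅⁴ − λ·x₁x₂x₃x₄ = 0; i.e., the polynomial T⁵ − λx₁x₂x₃x₄·T + (x₁⁵+⋯+x₄⁵) ∈ ℂ[T] has no repeated complex root. -/
theorem amgm4_aux (a b c d : ℝ) (ha : 0 < a) (hb : 0 < b) (hc : 0 < c) (hd : 0 < d) :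
    a * b * c * d ≤ ((a + b + c + d) / 4) ^ 4 := by
  have e1 : a * b ≤ ((a + b) / 2) ^ 2 := by nlinarith [sq_nonneg (a - b)]
  have e2 : c * d ≤ ((c + d) / 2) ^ 2 := by nlinarith [sq_nonneg (c - d)]
  have e3 : ((a + b) / 2) * ((c + d) / 2) ≤ ((a + b + c + d) / 4) ^ 2 := by
    nlinarith [sq_nonneg (a + b - c - d)]
  calc a * b * c * d = (a * b) * (c * d) := by ring
    _ ≤ ((a + b) / 2) ^ 2 * ((c + d) / 2) ^ 2 := by gcongr
    _ = (((a + b) / 2) * ((c + d) / 2)) ^ 2 := by ring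
    _ ≤ (((a + b + c + d) / 4) ^ 2) ^ 2 := by gcongr
    _ = _ := by ring

/-- For positive reals `x₁,…,x₄` and `0 ≤ λ < 5`, the polynomial
`T⁵ − λx₁x₂x₃x₄·T + (x₁⁵+⋯+x₄⁵) ∈ ℂ[T]` has no repeated complex root: there is
no `x₅ ∈ ℂ` at which both it and its derivative vanish. -/
theorem stmt_11 (x₁ x₂ x₃ x₄ lam : ℝ)
    (h₁ : 0 < x₁) (h₂ : 0 < x₂) (h₃ : 0 < x₃) (h₄ : 0 < x₄)
    (hlam0 : 0 ≤ lam) (hlam : lam < 5) :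
    ¬ ∃ x₅ : ℂ,
      x₅ ^ 5 - (lam : ℂ) * ((x₁ : ℂ) * x₂ * x₃ * x₄) * x₅
          + ((x₁ : ℂ) ^ 5 + (x₂ : ℂ) ^ 5 + (x₃ : ℂ) ^ 5 + (x₄ : ℂ) ^ 5) = 0 ∧
      5 * x₅ ^ 4 - (lam : ℂ) * ((x₁ : ℂ) * x₂ * x₃ * x₄) = 0 := by
  rintro ⟨z, hz, hd⟩
  have hP : 0 < x₁ * x₂ * x₃ * x₄ := by positivity
  have hS : 0 < x₁ ^ 5 + x₂ ^ 5 + x₃ ^ 5 + x₄ ^ 5 := by positivity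
  have a1 : z ^ 5 = (((x₁ ^ 5 + x₂ ^ 5 + x₃ ^ 5 + x₄ ^ 5) / 4 : ℝ) : ℂ) := by
    push_cast
    linear_combination (-1 / 4) * hz + (z / 4) * hd
  have a2 : z ^ 4 = ((lam * (x₁ * x₂ * x₃ * x₄) / 5 : ℝ) : ℂ) := by
    push_cast
    linear_combination (1 / 5) * hd
  have b1 := congrArg norm a1
  have b2 := congrArg norm a2
  rw [norm_pow, Complex.norm_real, Real.norm_of_nonneg (by positivity)] at b1 b2
  have c1 : ‖z‖ ^ 4 < x₁ * x₂ * x₃ * x₄ := by rw [b2]; nlinarith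
  have c2 := amgm4_aux (x₁ ^ 5) (x₂ ^ 5) (x₃ ^ 5) (x₄ ^ 5)
    (by positivity) (by positivity) (by positivity) (by positivity)
  rw [← b1] at c2
  have c3 : (‖z‖ ^ 4) ^ 5 < (x₁ * x₂ * x₃ * x₄) ^ 5 := by gcongr
  have c4 : (‖z‖ ^ 5) ^ 4 = (‖z‖ ^ 4) ^ 5 := by ring
  have c5 : x₁ ^ 5 * x₂ ^ 5 * x₃ ^ 5 * x₄ ^ 5 = (x₁ * x₂ * x₃ * x₄) ^ 5 := by ring
  linarith
end

section
/- Let λ be a real number and let x = (x₁,…,x₅) ∈ ℂ⁵ be nonzero. If all five partial derivatives of f_λ(x) = Σ_{i=1}^5 x_i⁵ − λ·∏_{i=1}^5 x_i vanish at x, i.e. 5x_j⁴ = λ·∏_{i≠j} x_i for every j = 1,…,5, then λ = 5. -/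
open scoped BigOperators

/-- If `λ ∈ ℝ` and some nonzero `x ∈ ℂ⁵` is a critical point of
`f_λ(x) = ∑ xᵢ⁵ − λ∏ xᵢ`, i.e. `5xⱼ⁴ = λ∏_{i≠j} xᵢ` for all `j`, then `λ = 5`. -/
theorem stmt_12 (lam : ℝ) (x : Fin 5 → ℂ) (hx : x ≠ 0)
    (hcrit : ∀ j, 5 * x j ^ 4 = (lam : ℂ) * ∏ i ∈ Finset.univ.erase j, x i) :
    lam = 5 := by
  have h : ∀ j, 5 * x j ^ 5 = (lam : ℂ) * ∏ i, x i := by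
    intro j
    rw [← Finset.mul_prod_erase Finset.univ x (Finset.mem_univ j)]
    linear_combination x j * hcrit j
  have hP : ∏ i, x i ≠ 0 := by
    intro h0
    apply hx
    funext j
    have := h j
    rw [h0] at this
    simpa using this
  have h5 : ∏ j, (5 * x j ^ 5) = ∏ _j : Fin 5, ((lam : ℂ) * ∏ i, x i) :=
    Finset.prod_congr rfl fun j _ => h j
  rw [Finset.prod_mul_distrib, Finset.prod_pow] at h5
  simp only [Finset.prod_const, Finset.card_univ, Fintype.card_fin, mul_pow] at h5
  have h6 := mul_right_cancel₀ (pow_ne_zero 5 hP) h5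
  have h7 : lam ^ 5 = 5 ^ 5 := by exact_mod_cast h6.symm
  exact (Odd.strictMono_pow (by decide : Odd 5)).injective h7
end

section
/- Let x = (x₁,…,x₅) ∈ ℂ⁵ be nonzero. Then all five partial derivatives of f₅(x) = Σ_{i=1}^5 x_i⁵ − 5·∏_{i=1}^5 x_i vanish at x (i.e. 5x_j⁴ = 5·∏_{i≠j} x_i for every j) if and only if there exist t ∈ ℂ ∖ {0} and ω₁,…,ω₅ ∈ ℂ with ω_j⁵ = 1 for every j, ∏_{j=1}^5 ω_j = 1, and x_j = t·ω_j for every j. Moreover any such x satisfies f₅(x) = 0. -/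
open scoped BigOperators

/-- A nonzero `x ∈ ℂ⁵` is a critical point of `f₅(x) = ∑ xᵢ⁵ − 5∏ xᵢ`
(i.e. `5xⱼ⁴ = 5∏_{i≠j} xᵢ` for all `j`) iff `x = t·ω` for some `t ≠ 0` and fifth
roots of unity `ω₁,…,ω₅` with `∏ ωⱼ = 1`; moreover any such `x` satisfies `f₅(x) = 0`. -/
theorem stmt_13 (x : Fin 5 → ℂ) (hx : x ≠ 0) :
    ((∀ j, 5 * x j ^ 4 = 5 * ∏ i ∈ Finset.univ.erase j, x i) ↔
      ∃ t : ℂ, t ≠ 0 ∧ ∃ ω : Fin 5 → ℂ,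
        (∀ j, ω j ^ 5 = 1) ∧ (∏ j, ω j = 1) ∧ ∀ j, x j = t * ω j) ∧
    ((∀ j, 5 * x j ^ 4 = 5 * ∏ i ∈ Finset.univ.erase j, x i) →
      (∑ j, x j ^ 5) - 5 * ∏ j, x j = 0) := by
  have key : ∀ j, x j * ∏ i ∈ Finset.univ.erase j, x i = ∏ i, x i := fun j =>
    Finset.mul_prod_erase Finset.univ x (Finset.mem_univ j)
  have h5 : (∀ j, 5 * x j ^ 4 = 5 * ∏ i ∈ Finset.univ.erase j, x i) →
      ∀ j, x j ^ 5 = ∏ i, x i := by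
    intro h j
    rw [← key j]
    linear_combination (x j / 5) * h j
  refine ⟨⟨?_, ?_⟩, ?_⟩
  · intro h
    have hP := h5 h
    have hP0 : ∏ i, x i ≠ 0 := by
      intro h0
      apply hx
      funext j
      have hj := hP j
      rw [h0] at hj
      exact pow_eq_zero_iff (by norm_num) |>.mp hj
    have hx0 : x 0 ≠ 0 := by
      intro h0
      apply hP0
      rw [← hP 0, h0]
      norm_num
    refine ⟨x 0, hx0, fun j => x j / x 0, ?_, ?_, ?_⟩
    · intro j
      rw [div_pow, hP j, hP 0, div_self hP0]
    · rw [Finset.prod_div_distrib, Finset.prod_const, Finset.card_univ, Fintype.card_fin,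
        hP 0, div_self hP0]
    · intro j
      field_simp
  · rintro ⟨t, ht, ω, hω, hprod, hxt⟩ j
    have hωj : ω j ≠ 0 := by
      intro h0
      have := hω j
      rw [h0] at this
      norm_num at this
    have hxj : x j ≠ 0 := by
      rw [hxt j]
      exact mul_ne_zero ht hωj
    have hP : ∏ i, x i = t ^ 5 := by
      simp_rw [hxt]
      rw [Finset.prod_mul_distrib, hprod, Finset.prod_const, Finset.card_univ,
        Fintype.card_fin, mul_one]
    have hj5 : x j ^ 5 = t ^ 5 := by
      rw [hxt j, mul_pow, hω j, mul_one]
    apply mul_left_cancel₀ hxj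
    linear_combination 5 * hj5 - 5 * hP - 5 * key j
  · intro h
    have hP := h5 h
    simp_rw [hP]
    simp
end
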